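/- Let (Q, m, k) be a commutative Noetherian local ring and let f, g be an exact pair of zerodivisors in m, i.e. f and g are nonzero elements of m with ann_Q(f) = (g) and ann_Q(g) = (f). Set R = Q/(f). Let M be a finitely generated R-module and let d ≥ 1 be an integer. If there exists a real constant c such that β_i^R(M) ≤ c·(i+1)^{d−1} for all i ≥ 0, then there exists a real constant c' such that β_i^Q(M) ≤ c'·(i+1)^{d} for all i ≥ 0. (That is, the complexity satisfies cx_Q(M) ≤ cx_R(M) + 1.) -/

import Mathlib

open CategoryTheory TensorProduct

/-- The `i`-th Betti number of a module `M` over a local ring `A`: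
`β_i^A(M) = dim_k Tor_i^A(M, k)`, computed as the `k`-dimension of
`k ⊗_A Tor_i^A(M, k)` (the two agree since `Tor_i^A(M, k)` is a `k`-vector
space, being annihilated by the maximal ideal of `A`). -/
noncomputable def bettiNumber (A : Type) [CommRing A] [IsLocalRing A]
    (M : Type) [AddCommGroup M] [Module A M] (i : ℕ) : ℕ :=
  Module.finrank (IsLocalRing.ResidueField A)
    (IsLocalRing.ResidueField A ⊗[A]
      (((Tor (ModuleCat A) i).obj (ModuleCat.of A M)).obj
        (ModuleCat.of A (IsLocalRing.ResidueField A))))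

/-!
Cover an `R`-module `M` minimally by `R^b`, with `b = β_0^R(M)`, and let `N` be the kernel. The long
exact sequence of `Tor^Q(-, k)` gives `β_{i+1}^Q(M) ≤ b β_{i+1}^Q(R) + β_i^Q(N)`, while minimality
gives `β_p^R(N) ≤ β_{p+1}^R(M)`; iterating, `β_i^Q(M) ≤ ∑_{p+q=i} β_p^R(M) β_q^Q(R)`.
For `R = Q/(f)` the exact sequences `0 → Q/(g) → Q → Q/(f) → 0` and `0 → Q/(f) → Q → Q/(g) → 0`
alternate to give `β_q^Q(R) ≤ 1`, so `β_i^Q(M)` is at most the sum of the first `i + 1` Betti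
numbers of `M` over `R`.
-/

universe u

theorem homologyMap_smul {R D ι : Type*} [Semiring R] [Category* D] [Preadditive D] [Linear R D]
    {c : ComplexShape ι} {K L : HomologicalComplex D c} (r : R) (φ : K ⟶ L) (i : ι)
    [K.HasHomology i] [L.HasHomology i] :
    HomologicalComplex.homologyMap (r • φ) i = r • HomologicalComplex.homologyMap φ i :=
  ShortComplex.homologyMap_smul ((HomologicalComplex.shortComplexFunctor D c i).map φ) r

theorem leftDerived_map_smul {R C D : Type*} [Semiring R] [Category* C] [Abelian C]
    [HasProjectiveResolutions C] [Category* D] [Abelian D] [Linear R C] [Linear R D]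
    (F : C ⥤ D) [F.Additive] [F.Linear R] (n : ℕ) {X Y : C} (r : R) (f : X ⟶ Y) :
    (F.leftDerived n).map (r • f) = r • (F.leftDerived n).map f := by
  let P := projectiveResolution X
  let P' := projectiveResolution Y
  let φ : P.complex ⟶ P'.complex := ProjectiveResolution.lift f P P'
  have hφ : φ ≫ P'.π = P.π ≫ (ChainComplex.single₀ C).map f :=
    ProjectiveResolution.lift_commutes f P P'
  have hf : (ChainComplex.single₀ C).map (r • f) = r • (ChainComplex.single₀ C).map f := by
    ext
    rw [HomologicalComplex.smul_f_apply, ChainComplex.single₀_map_f_zero,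
      ChainComplex.single₀_map_f_zero]
    rfl
  have hrφ : (r • φ) ≫ P'.π = P.π ≫ (ChainComplex.single₀ C).map (r • f) := by
    rw [hf, Linear.smul_comp, hφ, Linear.comp_smul]
  rw [F.leftDerived_map_eq n f φ hφ, F.leftDerived_map_eq n (r • f) (r • φ) hrφ]
  have hFφ : (F.mapHomologicalComplex _ ⋙ HomologicalComplex.homologyFunctor D _ n).map (r • φ) =
      r • (F.mapHomologicalComplex _ ⋙ HomologicalComplex.homologyFunctor D _ n).map φ := by
    rw [Functor.comp_map, Functor.map_smul]
    exact homologyMap_smul r _ n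
  rw [hFφ, Linear.smul_comp, Linear.comp_smul]

section Length

variable {A B C D E : Type*} [Ring A] [AddCommGroup B] [AddCommGroup C] [AddCommGroup D]
  [AddCommGroup E] [Module A B] [Module A C] [Module A D] [Module A E]
  {p : B →ₗ[A] C} {q : C →ₗ[A] D} {r : D →ₗ[A] E}

theorem length_add_length_le_of_exact (hpq : Function.Exact p q) (hqr : Function.Exact q r)
    (hr : Function.Surjective r) :
    Module.length A C + Module.length A E ≤ Module.length A B + Module.length A D := by
  have hC : Module.length A C = Module.length A p.range + Module.length A q.range :=
    Module.length_eq_add_of_exact p.range.subtype q.rangeRestrict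
      p.range.subtype_injective q.surjective_rangeRestrict fun x ↦ by simp [Subtype.ext_iff, hpq x]
  have hD : Module.length A D = Module.length A q.range + Module.length A E :=
    Module.length_eq_add_of_exact q.range.subtype r q.range.subtype_injective hr
      fun x ↦ by simp [hqr x]
  rw [hC, hD, add_assoc]
  gcongr
  exact Module.length_le_of_surjective _ p.surjective_rangeRestrict

theorem length_le_add_of_exact (hpq : Function.Exact p q) :
    Module.length A C ≤ Module.length A B + Module.length A D :=
  le_self_add.trans <|
    length_add_length_le_of_exact hpq (LinearMap.exact_map_mkQ_range q) q.range.mkQ_surjective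

end Length

/-- The length of `Tor_i^A(M, X)`. Unlike dimensions computed by `Module.finrank`, lengths in `ℕ∞`
are subadditive along exact sequences without any finiteness assumption. -/
noncomputable def torLength (A M X : Type u) [CommRing A] [AddCommGroup M] [Module A M]
    [AddCommGroup X] [Module A X] (i : ℕ) : ℕ∞ :=
  Module.length A (((Tor (ModuleCat.{u} A) i).obj (ModuleCat.of A M)).obj (ModuleCat.of A X))

/-- The chain complex `M ⊗ P`, whose homology is `Tor^A(M, X)` when `P` is a projective resolution
of `X`. -/
noncomputable abbrev tensorComplex {A : Type u} [CommRing A] (M : ModuleCat.{u} A)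
    (P : ChainComplex (ModuleCat.{u} A) ℕ) : ChainComplex (ModuleCat.{u} A) ℕ :=
  (((MonoidalCategory.tensoringLeft _).obj M).mapHomologicalComplex _).obj P

section Tor

variable {A : Type u} [CommRing A] (M X : Type u) [AddCommGroup M] [Module A M]
  [AddCommGroup X] [Module A X]

theorem torLength_eq_length_homology (P : ProjectiveResolution (ModuleCat.of A X)) (i : ℕ) :
    torLength A M X i =
      Module.length A ((tensorComplex (ModuleCat.of A M) P.complex).homology i) :=
  (P.isoLeftDerivedObj ((MonoidalCategory.tensoringLeft _).obj _) i).toLinearEquiv.length_eq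

variable {M} in
theorem torLength_congr {N : Type u} [AddCommGroup N] [Module A N] (e : M ≃ₗ[A] N) (i : ℕ) :
    torLength A M X i = torLength A N X i :=
  (((Tor (ModuleCat.{u} A) i).mapIso e.toModuleIso).app (ModuleCat.of A X)).toLinearEquiv.length_eq

theorem torLength_zero : torLength A M X 0 = Module.length A (M ⊗[A] X) :=
  ((MonoidalCategory.tensorLeft (ModuleCat.of A M)).leftDerivedZeroIsoSelf.app
    (ModuleCat.of A X)).toLinearEquiv.length_eq

theorem torLength_succ_eq_zero_of_flat [Module.Flat A M] (i : ℕ) : torLength A M X (i + 1) = 0 := by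
  let P := ProjectiveResolution.of (ModuleCat.of A X)
  have hP : (tensorComplex (ModuleCat.of A M) P.complex).ExactAt (i + 1) := by
    rw [HomologicalComplex.exactAt_iff' _ (i + 2) (i + 1) i (by simp) (by simp)]
    refine ModuleCat.shortComplex_exact _ (Module.Flat.lTensor_exact M ?_)
    exact (ShortComplex.ShortExact.moduleCat_exact_iff_function_exact _).1 (P.exact_succ i)
  rw [torLength_eq_length_homology M X P, Module.length_eq_zero_iff]
  exact ModuleCat.subsingleton_of_isZero hP.isZero_homology

theorem smul_tor_eq_zero {a : A} (ha : ∀ x : X, a • x = 0) (i : ℕ)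
    (t : ((Tor (ModuleCat.{u} A) i).obj (ModuleCat.of A M)).obj (ModuleCat.of A X)) :
    a • t = 0 := by
  have haX : a • 𝟙 (ModuleCat.of A X) = (0 : A) • 𝟙 _ := by
    ext x
    simpa using ha x
  have h := congr((((MonoidalCategory.tensoringLeft _).obj (ModuleCat.of A M)).leftDerived i).map
    $haX)
  rw [leftDerived_map_smul, leftDerived_map_smul, CategoryTheory.Functor.map_id, zero_smul] at h
  exact congr($h t)

end Tor

section ShortExact

variable {A N F M : Type u} [CommRing A] [AddCommGroup N] [Module A N] [AddCommGroup F] [Module A F]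
  [AddCommGroup M] [Module A M] {v : N →ₗ[A] F} {w : F →ₗ[A] M}

/-- The short complex `0 → N ⊗ P → F ⊗ P → M ⊗ P → 0` of chain complexes induced by an exact
sequence `0 → N → F → M → 0`. -/
noncomputable abbrev tensorShortComplex (hvw : Function.Exact v w)
    (P : ChainComplex (ModuleCat.{u} A) ℕ) :
    ShortComplex (ChainComplex (ModuleCat.{u} A) ℕ) where
  X₁ := tensorComplex (ModuleCat.of A N) P
  X₂ := tensorComplex (ModuleCat.of A F) P
  X₃ := tensorComplex (ModuleCat.of A M) P
  f := (NatTrans.mapHomologicalComplex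
    ((MonoidalCategory.tensoringLeft _).map (ModuleCat.ofHom v)) _).app P
  g := (NatTrans.mapHomologicalComplex
    ((MonoidalCategory.tensoringLeft _).map (ModuleCat.ofHom w)) _).app P
  zero := by
    rw [← NatTrans.comp_app, ← NatTrans.mapHomologicalComplex_comp, ← Functor.map_comp,
      ← ModuleCat.ofHom_comp, hvw.linearMap_comp_eq_zero]
    ext i : 2
    exact LinearMap.rTensor_zero (N := N) (P := M) (P.X i)

theorem tensorShortComplex_shortExact (hv : Function.Injective v) (hvw : Function.Exact v w)
    (hw : Function.Surjective w) (P : ChainComplex (ModuleCat.{u} A) ℕ)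
    [∀ i, Module.Flat A (P.X i)] : (tensorShortComplex hvw P).ShortExact :=
  HomologicalComplex.shortExact_of_degreewise_shortExact _ fun i ↦
    ModuleCat.shortComplex_shortExact _ (rTensor_exact (P.X i) hvw hw)
      (Module.Flat.rTensor_preserves_injective_linearMap v hv)
      (LinearMap.rTensor_surjective (P.X i) hw)

instance flat_projectiveResolution_X {Y : ModuleCat.{u} A} (P : ProjectiveResolution Y) (i : ℕ) :
    Module.Flat A (P.complex.X i) := by
  have : Module.Projective A (P.complex.X i) :=
    (IsProjective.iff_projective (P.complex.X i)).2 (P.projective i)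
  infer_instance

variable (X : Type u) [AddCommGroup X] [Module A X]

theorem torLength_zero_le_of_surjective (hw : Function.Surjective w) :
    torLength A M X 0 ≤ torLength A F X 0 := by
  rw [torLength_zero, torLength_zero]
  exact Module.length_le_of_surjective _ (LinearMap.rTensor_surjective X hw)

variable (hv : Function.Injective v) (hvw : Function.Exact v w) (hw : Function.Surjective w)
include hv hvw hw

theorem torLength_le_add_of_exact (i : ℕ) :
    torLength A F X i ≤ torLength A N X i + torLength A M X i := by
  have hS := tensorShortComplex_shortExact hv hvw hw
    (ProjectiveResolution.of (ModuleCat.of A X)).complex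
  simp only [torLength_eq_length_homology _ X (ProjectiveResolution.of _)]
  exact length_le_add_of_exact ((ShortComplex.ShortExact.moduleCat_exact_iff_function_exact _).1
    (hS.homology_exact₂ i))

theorem torLength_succ_le_add_of_exact (i : ℕ) :
    torLength A M X (i + 1) ≤ torLength A F X (i + 1) + torLength A N X i := by
  have hS := tensorShortComplex_shortExact hv hvw hw
    (ProjectiveResolution.of (ModuleCat.of A X)).complex
  simp only [torLength_eq_length_homology _ X (ProjectiveResolution.of _)]
  exact length_le_add_of_exact ((ShortComplex.ShortExact.moduleCat_exact_iff_function_exact _).1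
    (hS.homology_exact₃ (i + 1) i rfl))

theorem torLength_le_succ_add_of_exact (i : ℕ) :
    torLength A N X i ≤ torLength A M X (i + 1) + torLength A F X i := by
  have hS := tensorShortComplex_shortExact hv hvw hw
    (ProjectiveResolution.of (ModuleCat.of A X)).complex
  simp only [torLength_eq_length_homology _ X (ProjectiveResolution.of _)]
  exact length_le_add_of_exact ((ShortComplex.ShortExact.moduleCat_exact_iff_function_exact _).1
    (hS.homology_exact₁ (i + 1) i rfl))

theorem torLength_zero_add_zero_le_of_exact :
    torLength A N X 0 + torLength A M X 0 ≤ torLength A M X 1 + torLength A F X 0 := by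
  have hS := tensorShortComplex_shortExact hv hvw hw
    (ProjectiveResolution.of (ModuleCat.of A X)).complex
  have := hS.epi_g
  have hepi := HomologicalComplex.epi_homologyMap_of_epi_of_not_rel
    (tensorShortComplex hvw (ProjectiveResolution.of (ModuleCat.of A X)).complex).g 0 (by simp)
  simp only [torLength_eq_length_homology _ X (ProjectiveResolution.of _)]
  exact length_add_length_le_of_exact
    ((ShortComplex.ShortExact.moduleCat_exact_iff_function_exact _).1
      (hS.homology_exact₁ 1 0 rfl))
    ((ShortComplex.ShortExact.moduleCat_exact_iff_function_exact _).1 (hS.homology_exact₂ 0))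
    ((ModuleCat.epi_iff_surjective _).1 hepi)

end ShortExact

section Finite

variable {A : Type u} [CommRing A] (M X : Type u) [AddCommGroup M] [Module A M]
  [AddCommGroup X] [Module A X]

theorem torLength_self_zero : torLength A A X 0 = Module.length A X := by
  rw [torLength_zero, (TensorProduct.lid A X).length_eq]

theorem torLength_eq_zero_of_subsingleton [Subsingleton M] (i : ℕ) : torLength A M X i = 0 := by
  cases i with
  | zero =>
    rw [torLength_zero]
    exact Module.length_eq_zero
  | succ i => exact torLength_succ_eq_zero_of_flat M X i

theorem torLength_pi_le (n i : ℕ) : torLength A (Fin n → M) X i ≤ n * torLength A M X i := by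
  induction n with
  | zero => simp [torLength_eq_zero_of_subsingleton]
  | succ n ih =>
    calc torLength A (Fin (n + 1) → M) X i
        = torLength A (M × (Fin n → M)) X i :=
          torLength_congr X (Fin.consLinearEquiv A fun _ ↦ M).symm i
      _ ≤ torLength A M X i + torLength A (Fin n → M) X i :=
          torLength_le_add_of_exact X LinearMap.inl_injective .inl_snd LinearMap.snd_surjective i
      _ ≤ torLength A M X i + n * torLength A M X i := by gcongr
      _ = (n + 1 : ℕ) * torLength A M X i := by push_cast; ring

theorem torLength_ne_top [IsNoetherianRing A] [Module.Finite A M] (hX : Module.length A X ≠ ⊤)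
    (i : ℕ) : torLength A M X i ≠ ⊤ := by
  induction i generalizing M with
  | zero =>
    obtain ⟨n, w, hw⟩ := Module.Finite.exists_fin' A M
    refine ne_top_of_le_ne_top ?_
      ((torLength_zero_le_of_surjective X hw).trans (torLength_pi_le A X n 0))
    rw [torLength_self_zero]
    exact WithTop.mul_ne_top (ENat.natCast_ne_top n) hX
  | succ i ih =>
    obtain ⟨n, w, hw⟩ := Module.Finite.exists_fin' A M
    have h := torLength_succ_le_add_of_exact X w.ker.subtype_injective
      (LinearMap.exact_subtype_ker_map w) hw i
    rw [torLength_succ_eq_zero_of_flat (Fin n → A), zero_add] at h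
    exact ne_top_of_le_ne_top (ih w.ker) h

end Finite

section Minimal

open Finset IsLocalRing

variable {A : Type u} [CommRing A] [IsLocalRing A]

theorem length_residueField : Module.length A (ResidueField A) = 1 := by
  rw [Module.length_eq_of_surjective (R := ResidueField A) residue_surjective]
  exact Module.length_eq_one _ _

theorem torLength_residueField_zero (M : Type u) [AddCommGroup M] [Module A M] [Module.Finite A M] :
    torLength A M (ResidueField A) 0 =
      Module.finrank (ResidueField A) (ResidueField A ⊗[A] M) := by
  rw [torLength_zero, (TensorProduct.comm A M (ResidueField A)).length_eq,
    Module.length_eq_of_surjective (R := ResidueField A) residue_surjective,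
    Module.length_eq_finrank]

theorem exists_surjective_torLength_zero_eq (M : Type u) [AddCommGroup M] [Module A M]
    [Module.Finite A M] :
    ∃ (n : ℕ) (w : (Fin n → A) →ₗ[A] M),
      Function.Surjective w ∧ torLength A M (ResidueField A) 0 = n := by
  let b := Module.finBasis (ResidueField A) (ResidueField A ⊗[A] M)
  choose m hm using fun i ↦
    TensorProduct.mk_surjective A M (ResidueField A) residue_surjective (b i)
  refine ⟨_, Fintype.linearCombination A m, ?_, torLength_residueField_zero M⟩
  rw [← LinearMap.range_eq_top, Fintype.range_linearCombination]
  exact span_eq_top_of_tmul_eq_basis m b hm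

theorem torLength_ker_le_succ {M : Type u} [AddCommGroup M] [Module A M] {n : ℕ}
    {w : (Fin n → A) →ₗ[A] M} (hw : Function.Surjective w)
    (hn : torLength A M (ResidueField A) 0 = n) (i : ℕ) :
    torLength A w.ker (ResidueField A) i ≤ torLength A M (ResidueField A) (i + 1) := by
  cases i with
  | zero =>
    have hA : torLength A (Fin n → A) (ResidueField A) 0 ≤ n := by
      simpa [torLength_self_zero, length_residueField] using
        torLength_pi_le (A := A) A (ResidueField A) n 0
    have hle := torLength_zero_add_zero_le_of_exact (ResidueField A) w.ker.subtype_injective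
      (LinearMap.exact_subtype_ker_map w) hw
    rw [hn] at hle
    exact (ENat.add_le_add_iff_right (ENat.natCast_ne_top n)).1 (hle.trans (by gcongr))
  | succ i =>
    simpa [torLength_succ_eq_zero_of_flat] using torLength_le_succ_add_of_exact (ResidueField A)
      w.ker.subtype_injective (LinearMap.exact_subtype_ker_map w) hw (i + 1)

theorem torLength_le_sum_antidiagonal {Q : Type u} [CommRing Q] [Algebra Q A] [IsNoetherianRing A]
    (M X : Type u) [AddCommGroup M] [Module Q M] [Module A M] [IsScalarTower Q A M]
    [Module.Finite A M] [AddCommGroup X] [Module Q X] (i : ℕ) :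
    torLength Q M X i ≤ ∑ p ∈ antidiagonal i,
      torLength A M (ResidueField A) p.1 * torLength Q A X p.2 := by
  induction i generalizing M with
  | zero =>
    obtain ⟨n, w, hw, hn⟩ := exists_surjective_torLength_zero_eq (A := A) M
    simpa [hn] using (torLength_zero_le_of_surjective X (w := w.restrictScalars Q) hw).trans
      (torLength_pi_le A X n 0)
  | succ i ih =>
    obtain ⟨n, w, hw, hn⟩ := exists_surjective_torLength_zero_eq (A := A) M
    have hker := torLength_succ_le_add_of_exact X (v := w.ker.subtype.restrictScalars Q)
      (w := w.restrictScalars Q) w.ker.subtype_injective (LinearMap.exact_subtype_ker_map w) hw i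
    rw [Finset.Nat.sum_antidiagonal_succ, hn]
    refine hker.trans (add_le_add (torLength_pi_le A X n (i + 1)) ((ih w.ker).trans ?_))
    gcongr with p
    exact torLength_ker_le_succ hw hn p.1

end Minimal

/-- An exact pair of zerodivisors: `ann(f) = (g)` and `ann(g) = (f)`, stated elementwise. Degenerate
pairs such as `(0, 1)` are allowed. -/
structure IsExactPair {Q : Type*} [CommRing Q] (f g : Q) : Prop where
  mul_left_eq_zero_iff : ∀ x, x * f = 0 ↔ x ∈ Ideal.span {g}
  mul_right_eq_zero_iff : ∀ x, x * g = 0 ↔ x ∈ Ideal.span {f}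

theorem IsExactPair.symm {Q : Type*} [CommRing Q] {f g : Q} (h : IsExactPair f g) :
    IsExactPair g f :=
  ⟨h.mul_right_eq_zero_iff, h.mul_left_eq_zero_iff⟩

section ExactPair

variable {Q : Type u} [CommRing Q] (X : Type u) [AddCommGroup X] [Module Q X]

theorem torLength_quotient_span_succ_le {f : Q} {I : Ideal Q} (hf : ∀ x, x * f = 0 ↔ x ∈ I)
    (i : ℕ) :
    torLength Q (Q ⧸ Ideal.span {f}) X (i + 1) ≤ torLength Q (Q ⧸ I) X i := by
  have hker : LinearMap.ker (LinearMap.mulRight Q f) = I := by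
    ext x
    simp [hf]
  let v : Q ⧸ I →ₗ[Q] Q := I.liftQ (LinearMap.mulRight Q f) hker.ge
  have hv : Function.Injective v := LinearMap.ker_eq_bot.1 (I.ker_liftQ_eq_bot _ _ hker.le)
  have hvw : Function.Exact v (Ideal.span {f}).mkQ := by
    rw [LinearMap.exact_iff, Submodule.ker_mkQ, Submodule.range_liftQ]
    ext x
    simp [Ideal.mem_span_singleton', eq_comm]
  simpa [torLength_succ_eq_zero_of_flat] using
    torLength_succ_le_add_of_exact X hv hvw (Submodule.mkQ_surjective _) i

theorem IsExactPair.torLength_quotient_span_le_length {f g : Q} (h : IsExactPair f g) (i : ℕ) :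
    torLength Q (Q ⧸ Ideal.span {f}) X i ≤ Module.length Q X := by
  induction i generalizing f g with
  | zero =>
    exact (torLength_zero_le_of_surjective X (Submodule.mkQ_surjective _)).trans_eq
      (torLength_self_zero X)
  | succ i ih =>
    exact (torLength_quotient_span_succ_le X h.mul_left_eq_zero_iff i).trans (ih h.symm)

end ExactPair

section Betti

open IsLocalRing

variable {A : Type} [CommRing A] [IsLocalRing A] (M : Type) [AddCommGroup M] [Module A M]

theorem bettiNumber_eq_toNat_torLength (i : ℕ) :
    bettiNumber A M i = (torLength A M (ResidueField A) i).toNat := by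
  let T := ((Tor (ModuleCat A) i).obj (ModuleCat.of A M)).obj (ModuleCat.of A (ResidueField A))
  have hT : (maximalIdeal A • ⊤ : Submodule A T) = ⊥ := by
    rw [eq_bot_iff, Submodule.smul_le]
    intro a ha t _
    refine smul_tor_eq_zero M (ResidueField A) (fun x ↦ ?_) i t
    rw [Algebra.smul_def, ResidueField.algebraMap_eq, (residue_eq_zero_iff a).2 ha, zero_mul]
  have hlength : torLength A M (ResidueField A) i =
      Module.length (ResidueField A) (ResidueField A ⊗[A] T) := by
    rw [← Module.length_eq_of_surjective (S := A) residue_surjective]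
    exact (TensorProduct.quotTensorEquivQuotSMul T (maximalIdeal A) ≪≫ₗ
      Submodule.quotEquivOfEqBot _ hT).length_eq.symm
  rw [hlength, Module.length_eq_rank]
  exact (Cardinal.toNat_toENat _).symm

end Betti

theorem sum_range_succ_le_mul_pow {K : Type*} [CommRing K] [PartialOrder K] [IsOrderedRing K]
    {a : ℕ → K} {c : K} {e : ℕ} (ha : 0 ≤ a 0) (hc : ∀ p : ℕ, a p ≤ c * ((p : K) + 1) ^ e)
    (i : ℕ) : ∑ p ∈ Finset.range (i + 1), a p ≤ c * ((i : K) + 1) ^ (e + 1) := by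
  have hc0 : 0 ≤ c := by simpa using ha.trans (hc 0)
  calc ∑ p ∈ Finset.range (i + 1), a p
      ≤ ∑ p ∈ Finset.range (i + 1), c * ((i : K) + 1) ^ e := by
        refine Finset.sum_le_sum fun p hp ↦ (hc p).trans ?_
        have hpi : p ≤ i := Finset.mem_range_succ_iff.1 hp
        have hp0 : (0 : K) ≤ p + 1 := add_nonneg (Nat.cast_nonneg p) zero_le_one
        gcongr
    _ = c * ((i : K) + 1) ^ (e + 1) := by
        simp only [Finset.sum_const, Finset.card_range, nsmul_eq_mul]
        push_cast
        ring

section ExactZeroDivisors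

open Finset IsLocalRing

variable {Q : Type} [CommRing Q] [IsLocalRing Q] {f g : Q}
  (h : IsExactPair f g) [IsLocalRing (Q ⧸ Ideal.span {f})]
  [IsNoetherianRing (Q ⧸ Ideal.span {f})] (M : Type) [AddCommGroup M] [Module Q M]
  [Module (Q ⧸ Ideal.span {f}) M] [IsScalarTower Q (Q ⧸ Ideal.span {f}) M]
  [Module.Finite (Q ⧸ Ideal.span {f}) M]
include h

theorem IsExactPair.bettiNumber_le_sum (i : ℕ) :
    bettiNumber Q M i ≤ ∑ p ∈ range (i + 1), bettiNumber (Q ⧸ Ideal.span {f}) M p := by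
  set R := Q ⧸ Ideal.span {f}
  have hR (p : ℕ) : torLength R M (ResidueField R) p = bettiNumber R M p := by
    rw [bettiNumber_eq_toNat_torLength, ENat.natCast_toNat]
    exact torLength_ne_top M _ (by simp [length_residueField]) p
  have hQ (j : ℕ) : torLength Q R (ResidueField Q) j ≤ 1 :=
    (h.torLength_quotient_span_le_length _ j).trans_eq length_residueField
  have key : torLength Q M (ResidueField Q) i ≤
      (∑ p ∈ range (i + 1), bettiNumber R M p : ℕ) :=
    calc torLength Q M (ResidueField Q) i
        ≤ ∑ p ∈ antidiagonal i,
            torLength R M (ResidueField R) p.1 * torLength Q R (ResidueField Q) p.2 :=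
          torLength_le_sum_antidiagonal M (ResidueField Q) i
      _ ≤ ∑ p ∈ antidiagonal i, (bettiNumber R M p.1 : ℕ∞) :=
          sum_le_sum fun p _ ↦ (mul_le_of_le_one_right' (hQ p.2)).trans_eq (hR p.1)
      _ = (∑ p ∈ range (i + 1), bettiNumber R M p : ℕ) := by
          rw [Nat.sum_antidiagonal_eq_sum_range_succ fun p _ ↦ (bettiNumber R M p : ℕ∞),
            Nat.cast_sum]
  rw [bettiNumber_eq_toNat_torLength]
  exact ENat.toNat_le_of_le_natCast key

theorem complexity_le_of_exact_zerodivisor_general (e : ℕ) (c : ℝ)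
    (hc : ∀ i : ℕ, (bettiNumber (Q ⧸ Ideal.span {f}) M i : ℝ) ≤ c * ((i : ℝ) + 1) ^ e) (i : ℕ) :
    (bettiNumber Q M i : ℝ) ≤ c * ((i : ℝ) + 1) ^ (e + 1) :=
  calc (bettiNumber Q M i : ℝ)
      ≤ ∑ p ∈ range (i + 1), (bettiNumber (Q ⧸ Ideal.span {f}) M p : ℝ) := by
        exact_mod_cast h.bettiNumber_le_sum M i
    _ ≤ c * ((i : ℝ) + 1) ^ (e + 1) :=
        sum_range_succ_le_mul_pow (by positivity) hc i

end ExactZeroDivisors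

/-- **Complexity bound.** Let `f, g` be an exact pair of zerodivisors in the
maximal ideal of a Noetherian local ring `Q` and set `R = Q/(f)`. If the Betti
numbers of a finitely generated `R`-module `M` over `R` grow polynomially of
degree `< d` (i.e. `β_i^R(M) ≤ c·(i+1)^{d−1}`), then the Betti numbers of `M`
over `Q` grow polynomially of degree `< d + 1`; that is, `cx_Q(M) ≤ cx_R(M) + 1`. -/
theorem complexity_le_of_exact_zerodivisor
    (Q : Type) [CommRing Q] [IsNoetherianRing Q] [IsLocalRing Q]
    (f g : Q) (hf0 : f ≠ 0) (hg0 : g ≠ 0)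
    (hfm : f ∈ IsLocalRing.maximalIdeal Q) (hgm : g ∈ IsLocalRing.maximalIdeal Q)
    (hannf : ∀ x : Q, x * f = 0 ↔ x ∈ Ideal.span {g})
    (hanng : ∀ x : Q, x * g = 0 ↔ x ∈ Ideal.span {f})
    [IsLocalRing (Q ⧸ Ideal.span {f})]
    (M : Type) [AddCommGroup M] [Module Q M] [Module (Q ⧸ Ideal.span {f}) M]
    [IsScalarTower Q (Q ⧸ Ideal.span {f}) M]
    [Module.Finite (Q ⧸ Ideal.span {f}) M]
    (d : ℕ) (hd : 1 ≤ d) (c : ℝ)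
    (hc : ∀ i : ℕ, (bettiNumber (Q ⧸ Ideal.span {f}) M i : ℝ) ≤
      c * ((i : ℝ) + 1) ^ (d - 1)) :
    ∃ c' : ℝ, ∀ i : ℕ, (bettiNumber Q M i : ℝ) ≤ c' * ((i : ℝ) + 1) ^ d := by
  obtain ⟨e, rfl⟩ := Nat.exists_eq_add_of_le' hd
  exact ⟨c, complexity_le_of_exact_zerodivisor_general ⟨hannf, hanng⟩ M e c hc⟩
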